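/- Let K be a Markov kernel on a measurable space X that is reversible with respect to a probability measure π and has absolute spectral gap γ ∈ (0,1], let P ≥ 1 be an integer, and let (X_1,…,X_P) have the stationary chain law of length P for (K, π). Let g : X → ℝ be measurable with g ≤ 0 everywhere and ∫ g² dπ < ∞; set μ = ∫ g dπ, σ² = ∫ g² dπ − μ², and assume μ < 0 and σ² > 0. Let ḡ⁺(x) = max(g(x) − μ, 0). Then for every s ≥ 0: inf over θ > 0 of exp(−sPθ)·E[ exp( θ·Σ_{p=1}^P ( ḡ⁺(X_p) − ∫ ḡ⁺ dπ ) ) ] ≤ exp( −(Pγ/2)·min( s²/(4σ²), s/(10|μ|) ) ). -/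

import Mathlib

open MeasureTheory

/-- Reversibility of the kernel `K` with respect to `π`. -/
def Reversible {X : Type*} [MeasurableSpace X] (K : X → Measure X) (π : Measure X) : Prop :=
  ∀ A B : Set X, MeasurableSet A → MeasurableSet B →
    ∫⁻ x in A, K x B ∂π = ∫⁻ x in B, K x A ∂π

/-- `K` has absolute spectral gap `γ` (stated with squared `L²(π)` norms). -/
def HasAbsSpectralGap {X : Type*} [MeasurableSpace X] (K : X → Measure X) (π : Measure X)
    (γ : ℝ) : Prop :=
  ∀ h : X → ℝ, MemLp h 2 π → ∫ x, h x ∂π = 0 →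
    ∫ x, (∫ y, h y ∂(K x)) ^ 2 ∂π ≤ (1 - γ) ^ 2 * ∫ x, (h x) ^ 2 ∂π

/-- The law of `(X_1, …, X_{n+1})` for a Markov chain with kernel `K` and initial
distribution `μ`. -/
noncomputable def chainLaw {X : Type*} [MeasurableSpace X] (K : X → Measure X)
    (μ : Measure X) : (n : ℕ) → Measure (Fin (n + 1) → X)
  | 0 => μ.map (fun x => fun _ => x)
  | n + 1 => (chainLaw K μ n).bind (fun xs => (K (xs (Fin.last n))).map (Fin.snoc xs))

/-!
By Cauchy–Schwarz and the spectral gap, the bilinear form of `K` on `L²(π)` is dominated by the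
quadratic form of the León–Perron operator `A = γ π + (1 - γ) I`. The exponential moment of the sum
of `γ f` over a chain of length `n + 1` is `⟨√w, (√w K √w)ⁿ √w⟩` with `w = exp (γ f)`, hence at most
`r ^ (n + 1)` as soon as `√w A √w ≤ r`.

For `p > 0` with `∫ 1/p dπ ≤ 1`, Cauchy–Schwarz gives `(∫ u dπ)² ≤ ∫ p u² dπ`, so the rank-one
part of `A` is dominated by multiplication by `p`, and `√w A √w ≤ r` reduces to the pointwise
inequality `w (γ p + 1 - γ) ≤ r`. For a centred `f ≤ c < 1` with second moment at most `v`, the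
choice `p = 1 + α - f` with `α = v / (1 - c)` is admissible, and `1 + x ≤ exp x` gives
`r = exp (γ α)`. Applying this to `τ f` and taking `τ = s / (2 v + c s)` in Chernoff's bound
yields the exponent `γ s² / (2 (2 v + c s))` per step. The centred `ḡ⁺` qualifies with `c = |μ|` and
`v = σ²`, as taking positive parts does not increase the second moment of `g - μ`.
-/

open ProbabilityTheory
open scoped ENNReal Topology

section Kernel

variable {X Y : Type*} [MeasurableSpace X] [MeasurableSpace Y] {κ : Kernel X Y} {μ : Measure X}

theorem integral_comp_measure {h : Y → ℝ} (hh : Integrable h (κ ∘ₘ μ)) :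
    ∫ y, h y ∂(κ ∘ₘ μ) = ∫ x, ∫ y, h y ∂κ x ∂μ := by
  rw [Measure.comp_eq_comp_const_apply] at hh ⊢
  exact Kernel.integral_comp hh

theorem memLp_two_integral_kernel [IsMarkovKernel κ] {h : Y → ℝ} (hh : MemLp h 2 (κ ∘ₘ μ)) :
    MemLp (fun x ↦ ∫ y, h y ∂κ x) 2 μ := by
  have hmeas : AEStronglyMeasurable (fun x ↦ ∫ y, h y ∂κ x) μ := by
    have := hh.1
    rw [Measure.comp_eq_comp_const_apply] at this
    exact this.integral_kernel_comp
  have hmeas_ae : ∀ᵐ x ∂μ, AEStronglyMeasurable h (κ x) := by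
    have := hh.1
    rw [Measure.comp_eq_comp_const_apply] at this
    exact this.comp
  rw [memLp_two_iff_integrable_sq hmeas]
  refine (Measure.integrable_integral_norm_of_integrable_comp hh.integrable_sq).mono'
    (hmeas.pow 2) ?_
  filter_upwards [Measure.ae_integrable_of_integrable_comp hh.integrable_sq, hmeas_ae] with x hsq hm
  have hvar := variance_nonneg h (κ x)
  rw [variance_eq_sub ((memLp_two_iff_integrable_sq hm).2 hsq)] at hvar
  simpa using hvar

end Kernel

theorem covariance_sq_le_variance_mul_variance {Ω : Type*} [MeasurableSpace Ω] {μ : Measure Ω}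
    [IsFiniteMeasure μ] {U V : Ω → ℝ} (hU : MemLp U 2 μ) (hV : MemLp V 2 μ) :
    cov[U, V; μ] ^ 2 ≤ Var[U; μ] * Var[V; μ] := by
  have hquad (t : ℝ) : 0 ≤ Var[U; μ] * (t * t) + 2 * cov[U, V; μ] * t + Var[V; μ] := by
    have hvar := variance_nonneg (t • U + V) μ
    rw [variance_add (hU.const_smul t) hV, variance_smul, covariance_smul_left] at hvar
    linarith
  have := discrim_le_zero hquad
  rw [discrim] at this
  linarith

theorem sq_integral_le_integral_mul_sq {Ω : Type*} [MeasurableSpace Ω] {μ : Measure Ω}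
    {p u : Ω → ℝ} (hp0 : ∀ x, 0 < p x) (hpint : Integrable (fun x ↦ (p x)⁻¹) μ)
    (hp : ∫ x, (p x)⁻¹ ∂μ ≤ 1) (hu : Integrable u μ) (hpu : Integrable (fun x ↦ p x * u x ^ 2) μ) :
    (∫ x, u x ∂μ) ^ 2 ≤ ∫ x, p x * u x ^ 2 ∂μ := by
  set A := ∫ x, u x ∂μ with hA
  have hpointwise (x : Ω) : 2 * A * u x - A ^ 2 * (p x)⁻¹ ≤ p x * u x ^ 2 := by
    have hsq : p x * u x ^ 2 - (2 * A * u x - A ^ 2 * (p x)⁻¹)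
        = (p x)⁻¹ * (p x * u x - A) ^ 2 := by
      field_simp [(hp0 x).ne']
      ring
    rw [← sub_nonneg, hsq]
    exact mul_nonneg (inv_nonneg.2 (hp0 x).le) (sq_nonneg _)
  calc A ^ 2 ≤ 2 * A * A - A ^ 2 * ∫ x, (p x)⁻¹ ∂μ := by
        linarith [mul_le_mul_of_nonneg_left hp (sq_nonneg A)]
    _ = ∫ x, 2 * A * u x - A ^ 2 * (p x)⁻¹ ∂μ := by
        rw [integral_sub (hu.const_mul _) (hpint.const_mul _), integral_const_mul,
          integral_const_mul, hA]
    _ ≤ ∫ x, p x * u x ^ 2 ∂μ :=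
        integral_mono ((hu.const_mul _).sub (hpint.const_mul _)) hpu hpointwise

/-- The quadratic form `⟨h, Ah⟩` on `L²(π)` of the León–Perron operator
`A h = γ • ∫ h dπ + (1 - γ) • h`. It controls the quadratic form of every Markov operator with
absolute spectral gap `γ`. -/
noncomputable def leonPerronForm {X : Type*} [MeasurableSpace X] (π : Measure X) (γ : ℝ)
    (h : X → ℝ) : ℝ :=
  γ * (∫ x, h x ∂π) ^ 2 + (1 - γ) * ∫ x, h x ^ 2 ∂π

section SpectralGap

variable {X : Type*} [MeasurableSpace X] {κ : Kernel X X} {π : Measure X} [IsProbabilityMeasure π]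
  {γ r : ℝ} {h k w p : X → ℝ}

theorem leonPerronForm_eq_sq_integral_add_variance (hh : MemLp h 2 π) :
    leonPerronForm π γ h = (∫ x, h x ∂π) ^ 2 + (1 - γ) * Var[h; π] := by
  rw [leonPerronForm, variance_eq_sub hh]
  simp only [Pi.pow_apply]
  ring

/-- The León–Perron operator compressed by the weight `√w`, that is `√w A √w`, is bounded by `r` as
a quadratic form on `L²(π)`; the bound is tested on `√w • h` to avoid square roots. -/
def LeonPerronBound (π : Measure X) (γ : ℝ) (w : X → ℝ) (r : ℝ) : Prop :=
  ∀ h : X → ℝ, MemLp h 2 π → leonPerronForm π γ (fun x ↦ w x * h x) ≤ r * ∫ x, w x * h x ^ 2 ∂π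

theorem leonPerronBound_of_integral_inv_le_one (hγ : γ ∈ Set.Ioc 0 1) (hw : MemLp w ∞ π)
    (hw0 : ∀ x, 0 ≤ w x) (hp0 : ∀ x, 0 < p x) (hpint : Integrable (fun x ↦ (p x)⁻¹) π)
    (hp : ∫ x, (p x)⁻¹ ∂π ≤ 1) (hwp : ∀ x, w x * (γ * p x + (1 - γ)) ≤ r) :
    LeonPerronBound π γ w r := by
  intro h hh
  have hγ0 : 0 < γ := hγ.1
  have hγ1 : 0 ≤ 1 - γ := sub_nonneg.2 hγ.2
  have hwh : MemLp (fun x ↦ w x * h x) 2 π := hh.mul' hw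
  have hwhsq : Integrable (fun x ↦ r * (w x * h x ^ 2)) π :=
    ((hwh.integrable_mul hh).const_mul r).congr <| .of_forall fun x ↦ by
      simp only [Pi.mul_apply]
      ring
  have hpointwise (x : X) : γ * (p x * (w x * h x) ^ 2) + (1 - γ) * (w x * h x) ^ 2
      ≤ r * (w x * h x ^ 2) :=
    calc _ = w x * (γ * p x + (1 - γ)) * (w x * h x ^ 2) := by ring
      _ ≤ r * (w x * h x ^ 2) :=
        mul_le_mul_of_nonneg_right (hwp x) (mul_nonneg (hw0 x) (sq_nonneg _))
  have hpwh_nonneg (x : X) : 0 ≤ γ * (p x * (w x * h x) ^ 2) :=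
    mul_nonneg hγ0.le (mul_nonneg (hp0 x).le (sq_nonneg _))
  have hpmeas : AEStronglyMeasurable p π := by
    simpa only [Pi.inv_def, inv_inv] using hpint.1.aemeasurable.inv.aestronglyMeasurable
  have hpwh : Integrable (fun x ↦ γ * (p x * (w x * h x) ^ 2)) π :=
    hwhsq.mono' ((hpmeas.mul (hwh.1.pow 2)).const_mul γ) <| .of_forall fun x ↦ by
      rw [Real.norm_of_nonneg (hpwh_nonneg x)]
      linarith [hpointwise x, mul_nonneg hγ1 (sq_nonneg (w x * h x))]
  calc leonPerronForm π γ (fun x ↦ w x * h x)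
      ≤ γ * ∫ x, p x * (w x * h x) ^ 2 ∂π + (1 - γ) * ∫ x, (w x * h x) ^ 2 ∂π := by
        rw [leonPerronForm]
        gcongr
        exact sq_integral_le_integral_mul_sq hp0 hpint hp (hwh.integrable one_le_two)
          ((integrable_const_mul_iff hγ0.ne'.isUnit _).1 hpwh)
    _ = ∫ x, γ * (p x * (w x * h x) ^ 2) + (1 - γ) * (w x * h x) ^ 2 ∂π := by
        rw [integral_add hpwh (hwh.integrable_sq.const_mul _), integral_const_mul,
          integral_const_mul]
    _ ≤ ∫ x, r * (w x * h x ^ 2) ∂π :=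
        integral_mono (hpwh.add (hwh.integrable_sq.const_mul _)) hwhsq hpointwise
    _ = r * ∫ x, w x * h x ^ 2 ∂π := integral_const_mul _ _

theorem LeonPerronBound.integral_le (hbound : LeonPerronBound π γ w r) (hγ : γ ≤ 1) (hr : 0 < r)
    (hw : MemLp w ∞ π) : ∫ x, w x ∂π ≤ r := by
  have hform := hbound (fun _ ↦ 1) (memLp_const 1)
  simp only [mul_one, one_pow] at hform
  rw [leonPerronForm_eq_sq_integral_add_variance (hw.mono_exponent le_top)] at hform
  have hvar := mul_nonneg (sub_nonneg.2 hγ) (variance_nonneg w π)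
  by_contra! hlt
  nlinarith [mul_lt_mul_of_pos_right hlt (hr.trans hlt)]

variable [IsMarkovKernel κ]

theorem HasAbsSpectralGap.variance_integral_kernel_le (hgap : HasAbsSpectralGap κ π γ)
    (hinv : κ.Invariant π) (hh : MemLp h 2 π) :
    Var[fun x ↦ ∫ y, h y ∂κ x; π] ≤ (1 - γ) ^ 2 * Var[h; π] := by
  have hh' : MemLp h 2 (κ ∘ₘ π) := by rwa [hinv.def]
  have hh_int : Integrable h (κ ∘ₘ π) := hh'.integrable one_le_two
  have hmean : ∫ x, ∫ y, h y ∂κ x ∂π = ∫ x, h x ∂π := by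
    rw [← integral_comp_measure hh_int, hinv.def]
  have hcentered : (fun x ↦ (∫ y, (h y - ∫ z, h z ∂π) ∂κ x) ^ 2)
      =ᵐ[π] fun x ↦ (∫ y, h y ∂κ x - ∫ z, h z ∂π) ^ 2 := by
    filter_upwards [Measure.ae_integrable_of_integrable_comp hh_int] with x hx
    rw [integral_sub hx (integrable_const _), integral_const, probReal_univ, one_smul]
  rw [variance_eq_integral (memLp_two_integral_kernel hh').aemeasurable, hmean,
    variance_eq_integral hh.aemeasurable, ← integral_congr_ae hcentered]
  refine hgap _ (hh.sub (memLp_const _)) ?_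
  rw [integral_sub (hh.integrable one_le_two) (integrable_const _)]
  simp

theorem HasAbsSpectralGap.two_mul_integral_mul_integral_kernel_le (hgap : HasAbsSpectralGap κ π γ)
    (hinv : κ.Invariant π) (hγ : γ ≤ 1) (hk : MemLp k 2 π) (hh : MemLp h 2 π) :
    2 * ∫ x, k x * ∫ y, h y ∂κ x ∂π ≤ leonPerronForm π γ k + leonPerronForm π γ h := by
  have hh' : MemLp h 2 (κ ∘ₘ π) := by rwa [hinv.def]
  have hKh := memLp_two_integral_kernel hh'
  set u : X → ℝ := fun x ↦ ∫ y, h y ∂κ x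
  have hmean : ∫ x, u x ∂π = ∫ x, h x ∂π := by
    rw [← integral_comp_measure (hh'.integrable one_le_two), hinv.def]
  have hsplit : ∫ x, k x * u x ∂π = cov[k, u; π] + (∫ x, k x ∂π) * ∫ x, h x ∂π := by
    rw [covariance_eq_sub hk hKh, hmean]
    simp
  have : 0 ≤ 1 - γ := sub_nonneg.2 hγ
  have hVk := variance_nonneg k π
  have hVh := variance_nonneg h π
  have hcov_sq : cov[k, u; π] ^ 2 ≤ ((1 - γ) * (Var[k; π] + Var[h; π]) / 2) ^ 2 :=
    calc cov[k, u; π] ^ 2 ≤ Var[k; π] * Var[u; π] := covariance_sq_le_variance_mul_variance hk hKh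
      _ ≤ Var[k; π] * ((1 - γ) ^ 2 * Var[h; π]) := by
        gcongr
        exact hgap.variance_integral_kernel_le hinv hh
      _ ≤ ((1 - γ) * (Var[k; π] + Var[h; π]) / 2) ^ 2 := by
        nlinarith [mul_nonneg (sq_nonneg (1 - γ)) (sq_nonneg (Var[k; π] - Var[h; π]))]
  have hcov : cov[k, u; π] ≤ (1 - γ) * (Var[k; π] + Var[h; π]) / 2 :=
    (abs_le_of_sq_le_sq' hcov_sq (by positivity)).2
  rw [hsplit, leonPerronForm_eq_sq_integral_add_variance hk,
    leonPerronForm_eq_sq_integral_add_variance hh]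
  linarith [two_mul_le_add_sq (∫ x, k x ∂π) (∫ x, h x ∂π)]

theorem LeonPerronBound.integral_mul_sq_integral_kernel_le (hbound : LeonPerronBound π γ w r)
    (hgap : HasAbsSpectralGap κ π γ) (hinv : κ.Invariant π) (hγ : γ ≤ 1) (hr : 0 < r)
    (hw : MemLp w ∞ π) (hh : MemLp h 2 π) :
    ∫ x, w x * (r⁻¹ * ∫ y, w y * h y ∂κ x) ^ 2 ∂π ≤ ∫ x, w x * h x ^ 2 ∂π := by
  have hwh : MemLp (fun x ↦ w x * h x) 2 π := hh.mul' hw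
  set k : X → ℝ := fun x ↦ r⁻¹ * ∫ y, w y * h y ∂κ x
  have hk : MemLp k 2 π :=
    (memLp_two_integral_kernel (by rwa [hinv.def])).const_mul r⁻¹
  have hpairing : ∫ x, w x * k x * ∫ y, w y * h y ∂κ x ∂π = r * ∫ x, w x * k x ^ 2 ∂π := by
    rw [← integral_const_mul]
    congr 1 with x
    simp only [k]
    field_simp
  have hcross := hgap.two_mul_integral_mul_integral_kernel_le hinv hγ (hk.mul' hw) hwh
  rw [hpairing] at hcross
  refine le_of_mul_le_mul_left ?_ hr
  linarith [hbound k hk, hbound h hh]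

end SpectralGap

section Chain

variable {X : Type*} [MeasurableSpace X]

theorem measurable_finSnoc {n : ℕ} :
    Measurable fun q : (Fin n → X) × X ↦ (Fin.snoc (α := fun _ ↦ X) q.1 q.2 : Fin (n + 1) → X) := by
  refine measurable_pi_iff.2 (Fin.lastCases ?_ fun j ↦ ?_)
  · simpa only [Fin.snoc_last] using measurable_snd
  · simp only [Fin.snoc_castSucc]
    exact (measurable_pi_apply j).comp measurable_fst

theorem measurable_finSnoc_right {n : ℕ} (xs : Fin n → X) :
    Measurable (Fin.snoc (α := fun _ ↦ X) xs : X → Fin (n + 1) → X) :=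
  measurable_finSnoc.comp measurable_prodMk_left

theorem lintegral_ofReal_mul_ofReal {μ : Measure X} {w h : X → ℝ} (hw0 : ∀ x, 0 ≤ w x)
    (hh0 : ∀ x, 0 ≤ h x) (hwh : Integrable (fun x ↦ w x * h x) μ) :
    ∫⁻ x, ENNReal.ofReal (w x) * ENNReal.ofReal (h x) ∂μ
      = ENNReal.ofReal (∫ x, w x * h x ∂μ) := by
  rw [ofReal_integral_eq_lintegral_ofReal hwh (.of_forall fun x ↦ mul_nonneg (hw0 x) (hh0 x))]
  simp only [ENNReal.ofReal_mul (hw0 _)]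

theorem lintegral_ofReal_mul_ofReal_le {μ : Measure X} {w h : X → ℝ} (hw0 : ∀ x, 0 ≤ w x)
    (hh0 : ∀ x, 0 ≤ h x) (hw : Integrable w μ) (hwh : Integrable (fun x ↦ w x * h x) μ)
    (hwhsq : Integrable (fun x ↦ w x * h x ^ 2) μ) :
    ∫⁻ x, ENNReal.ofReal (w x) * ENNReal.ofReal (h x) ∂μ
      ≤ ENNReal.ofReal ((∫ x, w x ∂μ + ∫ x, w x * h x ^ 2 ∂μ) / 2) := by
  rw [lintegral_ofReal_mul_ofReal hw0 hh0 hwh, ← integral_add hw hwhsq, ← integral_div]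
  refine ENNReal.ofReal_le_ofReal (integral_mono hwh ((hw.add hwhsq).div_const 2) fun x ↦ ?_)
  have : 0 ≤ w x * (h x - 1) ^ 2 := mul_nonneg (hw0 x) (sq_nonneg _)
  linarith

theorem memLp_of_nonneg_of_le {h : X → ℝ} {C : ℝ} (hh : Measurable h) (hh0 : ∀ x, 0 ≤ h x)
    (hhC : ∀ x, h x ≤ C) (p : ℝ≥0∞) (μ : Measure X) [IsFiniteMeasure μ] : MemLp h p μ :=
  .of_bound hh.aestronglyMeasurable C <| .of_forall fun x ↦ by
    simpa only [Real.norm_of_nonneg (hh0 x)] using hhC x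

theorem integrable_mul_of_nonneg_of_le {w h : X → ℝ} {C D : ℝ} (hw : Measurable w)
    (hw0 : ∀ x, 0 ≤ w x) (hwC : ∀ x, w x ≤ C) (hh : Measurable h) (hh0 : ∀ x, 0 ≤ h x)
    (hhD : ∀ x, h x ≤ D) (μ : Measure X) [IsFiniteMeasure μ] :
    Integrable (fun x ↦ w x * h x) μ :=
  (memLp_of_nonneg_of_le hw hw0 hwC 2 μ).integrable_mul (memLp_of_nonneg_of_le hh hh0 hhD 2 μ)

theorem measurable_map_finSnoc_last (κ : Kernel X X) [IsSFiniteKernel κ] (n : ℕ) :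
    Measurable fun xs : Fin (n + 1) → X ↦
      (κ (xs (Fin.last n))).map (Fin.snoc (α := fun _ ↦ X) xs) := by
  refine Measure.measurable_of_measurable_coe _ fun S hS ↦ ?_
  simp only [Measure.map_apply (measurable_finSnoc_right _) hS]
  exact Kernel.measurable_kernel_prodMk_left
    (κ := κ.comap (fun xs : Fin (n + 1) → X ↦ xs (Fin.last n)) (measurable_pi_apply _))
    (measurable_finSnoc hS)

theorem lintegral_prod_mul_last_chainLaw_succ (κ : Kernel X X) [IsSFiniteKernel κ]
    (μ : Measure X) (n : ℕ) {w h : X → ℝ≥0∞} (hw : Measurable w) (hh : Measurable h) :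
    ∫⁻ xs, (∏ i, w (xs i)) * h (xs (Fin.last (n + 1))) ∂chainLaw κ μ (n + 1)
      = ∫⁻ xs, (∏ i, w (xs i)) * ∫⁻ y, w y * h y ∂κ (xs (Fin.last n)) ∂chainLaw κ μ n := by
  have hmeas : Measurable fun xs : Fin (n + 2) → X ↦
      (∏ i, w (xs i)) * h (xs (Fin.last (n + 1))) := by fun_prop
  rw [chainLaw, Measure.lintegral_bind (measurable_map_finSnoc_last κ n).aemeasurable
    hmeas.aemeasurable]
  congr 1 with xs
  rw [lintegral_map hmeas (measurable_finSnoc_right xs),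
    ← lintegral_const_mul _ (by fun_prop)]
  congr 1 with y
  simp [Fin.prod_univ_castSucc, mul_assoc]

variable {κ : Kernel X X} {r C D : ℝ} {w h : X → ℝ}

theorem lintegral_prod_ofReal_mul_last_chainLaw_succ [IsFiniteKernel κ] (μ : Measure X)
    (hr : 0 < r) (hw : Measurable w) (hw0 : ∀ x, 0 ≤ w x) (hwC : ∀ x, w x ≤ C) (n : ℕ)
    (hh : Measurable h) (hh0 : ∀ x, 0 ≤ h x) (hhD : ∀ x, h x ≤ D) :
    ∫⁻ xs, (∏ i, ENNReal.ofReal (w (xs i))) * ENNReal.ofReal (h (xs (Fin.last (n + 1))))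
        ∂chainLaw κ μ (n + 1)
      = ENNReal.ofReal r * ∫⁻ xs, (∏ i, ENNReal.ofReal (w (xs i)))
        * ENNReal.ofReal (r⁻¹ * ∫ y, w y * h y ∂κ (xs (Fin.last n))) ∂chainLaw κ μ n := by
  have hstep (x : X) : ∫⁻ y, ENNReal.ofReal (w y) * ENNReal.ofReal (h y) ∂κ x
      = ENNReal.ofReal r * ENNReal.ofReal (r⁻¹ * ∫ y, w y * h y ∂κ x) := by
    rw [lintegral_ofReal_mul_ofReal hw0 hh0
        (integrable_mul_of_nonneg_of_le hw hw0 hwC hh hh0 hhD (κ x)),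
      ← ENNReal.ofReal_mul hr.le, mul_inv_cancel_left₀ hr.ne']
  rw [lintegral_prod_mul_last_chainLaw_succ κ μ n hw.ennreal_ofReal hh.ennreal_ofReal,
    ← lintegral_const_mul' _ _ ENNReal.ofReal_ne_top]
  simp only [hstep, mul_left_comm]

variable [IsMarkovKernel κ] {π : Measure X} [IsProbabilityMeasure π] {γ : ℝ}

theorem LeonPerronBound.lintegral_prod_mul_last_chainLaw_le (hbound : LeonPerronBound π γ w r)
    (hgap : HasAbsSpectralGap κ π γ) (hinv : κ.Invariant π) (hγ : γ ≤ 1) (hr : 0 < r)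
    (hw : Measurable w) (hw0 : ∀ x, 0 ≤ w x) (hwC : ∀ x, w x ≤ C) (n : ℕ)
    (hh : Measurable h) (hh0 : ∀ x, 0 ≤ h x) (hhD : ∀ x, h x ≤ D) :
    ∫⁻ xs, (∏ i, ENNReal.ofReal (w (xs i))) * ENNReal.ofReal (h (xs (Fin.last n)))
        ∂chainLaw κ π n
      ≤ ENNReal.ofReal (r ^ n * ((∫ x, w x ∂π + ∫ x, w x * h x ^ 2 ∂π) / 2)) := by
  induction n generalizing h D with
  | zero =>
    have hwh := integrable_mul_of_nonneg_of_le hw hw0 hwC hh hh0 hhD π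
    have hwhsq := integrable_mul_of_nonneg_of_le hw hw0 hwC (hh.pow_const 2)
      (fun x ↦ sq_nonneg (h x)) (fun x ↦ pow_le_pow_left₀ (hh0 x) (hhD x) 2) π
    have hw_int := (memLp_of_nonneg_of_le hw hw0 hwC 1 π).integrable le_rfl
    rw [chainLaw, lintegral_map (by fun_prop) (by fun_prop)]
    simpa using lintegral_ofReal_mul_ofReal_le hw0 hh0 hw_int hwh hwhsq
  | succ n ih =>
    set k : X → ℝ := fun x ↦ r⁻¹ * ∫ y, w y * h y ∂κ x
    have hwh0 (y : X) : 0 ≤ w y * h y := mul_nonneg (hw0 y) (hh0 y)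
    have hwhCD (y : X) : w y * h y ≤ C * D :=
      mul_le_mul (hwC y) (hhD y) (hh0 y) ((hw0 y).trans (hwC y))
    have hwh (x : X) := integrable_mul_of_nonneg_of_le hw hw0 hwC hh hh0 hhD (κ x)
    have hk : Measurable k := (hw.mul hh).stronglyMeasurable.integral_kernel.measurable.const_mul _
    have hk0 (x : X) : 0 ≤ k x := mul_nonneg (inv_nonneg.2 hr.le) (integral_nonneg hwh0)
    have hkD (x : X) : k x ≤ r⁻¹ * (C * D) := by
      refine mul_le_mul_of_nonneg_left ?_ (inv_nonneg.2 hr.le)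
      simpa using integral_mono (hwh x) (integrable_const (C * D)) hwhCD
    have hcontract : ∫ x, w x * k x ^ 2 ∂π ≤ ∫ x, w x * h x ^ 2 ∂π :=
      hbound.integral_mul_sq_integral_kernel_le hgap hinv hγ hr
        (memLp_of_nonneg_of_le hw hw0 hwC ∞ π) (memLp_of_nonneg_of_le hh hh0 hhD 2 π)
    rw [lintegral_prod_ofReal_mul_last_chainLaw_succ π hr hw hw0 hwC n hh hh0 hhD]
    calc _ ≤ ENNReal.ofReal r
            * ENNReal.ofReal (r ^ n * ((∫ x, w x ∂π + ∫ x, w x * k x ^ 2 ∂π) / 2)) := by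
          gcongr
          exact ih hk hk0 hkD
      _ ≤ _ := by
          rw [← ENNReal.ofReal_mul hr.le, ← mul_assoc, ← pow_succ']
          gcongr

theorem LeonPerronBound.lintegral_prod_chainLaw_le (hbound : LeonPerronBound π γ w r)
    (hgap : HasAbsSpectralGap κ π γ) (hinv : κ.Invariant π) (hγ : γ ≤ 1) (hr : 0 < r)
    (hw : Measurable w) (hw0 : ∀ x, 0 ≤ w x) (hwC : ∀ x, w x ≤ C) (n : ℕ) :
    ∫⁻ xs, ∏ i, ENNReal.ofReal (w (xs i)) ∂chainLaw κ π n ≤ ENNReal.ofReal (r ^ (n + 1)) := by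
  have hone := hbound.lintegral_prod_mul_last_chainLaw_le hgap hinv hγ hr hw hw0 hwC n
    (measurable_const (a := (1 : ℝ))) (fun _ ↦ zero_le_one) fun _ ↦ le_rfl
  simp only [ENNReal.ofReal_one, mul_one, one_pow, add_self_div_two] at hone
  refine hone.trans (ENNReal.ofReal_le_ofReal ?_)
  rw [pow_succ]
  gcongr
  exact hbound.integral_le hγ hr (memLp_of_nonneg_of_le hw hw0 hwC ∞ π)

end Chain

theorem inv_sub_le {D t c : ℝ} (hD : 1 ≤ D) (htc : t ≤ c) (hc : c < 1) :
    (D - t)⁻¹ ≤ D⁻¹ + t / D ^ 2 + t ^ 2 / (D * (1 - c)) := by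
  have hDt : 0 < D - t := by linarith
  have : 0 < D := by linarith
  have : 0 < 1 - c := sub_pos.2 hc
  have hdenom : D * (1 - c) ≤ D ^ 2 * (D - t) :=
    calc D * (1 - c) ≤ D ^ 2 * (1 - c) := by
          gcongr
          exact le_self_pow₀ hD two_ne_zero
      _ ≤ D ^ 2 * (D - t) := by gcongr
  calc (D - t)⁻¹ = D⁻¹ + t / D ^ 2 + t ^ 2 / (D ^ 2 * (D - t)) := by
        field_simp
        ring
    _ ≤ D⁻¹ + t / D ^ 2 + t ^ 2 / (D * (1 - c)) := by gcongr

theorem integrable_inv_sub {Ω : Type*} [MeasurableSpace Ω] {μ : Measure Ω} [IsFiniteMeasure μ]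
    {D c : ℝ} {f : Ω → ℝ} (hf : AEStronglyMeasurable f μ) (hfc : ∀ x, f x ≤ c) (hcD : c < D) :
    Integrable (fun x ↦ (D - f x)⁻¹) μ := by
  refine .of_bound (hf.aemeasurable.const_sub D).inv.aestronglyMeasurable (D - c)⁻¹ ?_
  filter_upwards with x
  rw [Real.norm_of_nonneg (inv_nonneg.2 (by linarith [hfc x]))]
  exact inv_anti₀ (sub_pos.2 hcD) (sub_le_sub_left (hfc x) D)

section MGF

variable {X : Type*} [MeasurableSpace X] {κ : Kernel X X} [IsMarkovKernel κ] {π : Measure X}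
  [IsProbabilityMeasure π] {γ c v : ℝ} {f : X → ℝ}

theorem integral_inv_one_add_sub_le_one (hf : MemLp f 2 π) (hfc : ∀ x, f x ≤ c) (hc : c < 1)
    (hf0 : ∫ x, f x ∂π = 0) (hfv : ∫ x, f x ^ 2 ∂π ≤ v) :
    ∫ x, (1 + v / (1 - c) - f x)⁻¹ ∂π ≤ 1 := by
  have hc0 : 0 < 1 - c := sub_pos.2 hc
  have hv : 0 ≤ v := (integral_nonneg fun x ↦ sq_nonneg (f x)).trans hfv
  set D := 1 + v / (1 - c)
  have hD : 1 ≤ D := le_add_of_nonneg_right (by positivity)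
  have : 0 < D := by linarith
  have hlin : Integrable (fun x ↦ D⁻¹ + f x / D ^ 2) π :=
    (integrable_const _).add ((hf.integrable one_le_two).div_const _)
  have hquad : Integrable (fun x ↦ f x ^ 2 / (D * (1 - c))) π := hf.integrable_sq.div_const _
  calc ∫ x, (D - f x)⁻¹ ∂π
      ≤ ∫ x, D⁻¹ + f x / D ^ 2 + f x ^ 2 / (D * (1 - c)) ∂π :=
        integral_mono (integrable_inv_sub hf.1 hfc (by linarith)) (hlin.add hquad)
          fun x ↦ inv_sub_le hD (hfc x) hc
    _ = D⁻¹ + (∫ x, f x ^ 2 ∂π) / (D * (1 - c)) := by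
        rw [integral_add hlin hquad,
          integral_add (integrable_const _) ((hf.integrable one_le_two).div_const _),
          integral_div, integral_div, hf0]
        simp
    _ ≤ D⁻¹ + v / (D * (1 - c)) := by gcongr
    _ = 1 := by
        have hDc : D * (1 - c) = 1 - c + v := by simp only [D]; field_simp
        field_simp
        linarith

theorem leonPerronBound_exp (hγ : γ ∈ Set.Ioc 0 1) (hfmeas : Measurable f) (hf : MemLp f 2 π)
    (hfc : ∀ x, f x ≤ c) (hc : c < 1) (hf0 : ∫ x, f x ∂π = 0) (hfv : ∫ x, f x ^ 2 ∂π ≤ v) :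
    LeonPerronBound π γ (fun x ↦ Real.exp (γ * f x)) (Real.exp (γ * (v / (1 - c)))) := by
  have hγ0 : 0 ≤ γ := hγ.1.le
  have hα : 0 ≤ v / (1 - c) :=
    div_nonneg ((integral_nonneg fun x ↦ sq_nonneg (f x)).trans hfv) (sub_pos.2 hc).le
  refine leonPerronBound_of_integral_inv_le_one (p := fun x ↦ 1 + v / (1 - c) - f x) hγ
    (memLp_of_nonneg_of_le (C := Real.exp (γ * c)) (by fun_prop) (fun x ↦ (Real.exp_pos _).le)
      (fun x ↦ by gcongr; exact hfc x) ∞ π)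
    (fun x ↦ (Real.exp_pos _).le) (fun x ↦ by linarith [hfc x])
    (integrable_inv_sub hf.1 hfc (by linarith))
    (integral_inv_one_add_sub_le_one hf hfc hc hf0 hfv) fun x ↦ ?_
  calc Real.exp (γ * f x) * (γ * (1 + v / (1 - c) - f x) + (1 - γ))
      ≤ Real.exp (γ * f x) * Real.exp (γ * (v / (1 - c)) - γ * f x) := by
        gcongr
        linarith [Real.add_one_le_exp (γ * (v / (1 - c)) - γ * f x)]
    _ = Real.exp (γ * (v / (1 - c))) := by
        rw [← Real.exp_add]
        ring_nf

theorem HasAbsSpectralGap.lintegral_exp_sum_chainLaw_le (hgap : HasAbsSpectralGap κ π γ)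
    (hinv : κ.Invariant π) (hγ : γ ∈ Set.Ioc 0 1) (hfmeas : Measurable f) (hf : MemLp f 2 π)
    (hfc : ∀ x, f x ≤ c) (hc : c < 1) (hf0 : ∫ x, f x ∂π = 0) (hfv : ∫ x, f x ^ 2 ∂π ≤ v)
    (n : ℕ) :
    ∫⁻ xs, ENNReal.ofReal (Real.exp (γ * ∑ i, f (xs i))) ∂chainLaw κ π n
      ≤ ENNReal.ofReal (Real.exp ((n + 1) * (γ * (v / (1 - c))))) := by
  have hprod (xs : Fin (n + 1) → X) : ENNReal.ofReal (Real.exp (γ * ∑ i, f (xs i)))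
      = ∏ i, ENNReal.ofReal (Real.exp (γ * f (xs i))) := by
    rw [Finset.mul_sum, Real.exp_sum,
      ENNReal.ofReal_prod_of_nonneg fun i _ ↦ (Real.exp_pos _).le]
  simp only [hprod]
  have hexp_le (x : X) : Real.exp (γ * f x) ≤ Real.exp (γ * c) := by
    have := hγ.1.le
    gcongr
    exact hfc x
  refine ((leonPerronBound_exp hγ hfmeas hf hfc hc hf0 hfv).lintegral_prod_chainLaw_le hgap hinv
    hγ.2 (Real.exp_pos _) (by fun_prop) (fun x ↦ (Real.exp_pos _).le) hexp_le n).trans_eq ?_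
  rw [← Real.exp_nat_mul]
  push_cast
  rfl

end MGF
section Bernstein

variable {X : Type*} [MeasurableSpace X] {κ : Kernel X X} [IsMarkovKernel κ] {π : Measure X}
  [IsProbabilityMeasure π] {γ c v s : ℝ} {f : X → ℝ}
  (hgap : HasAbsSpectralGap κ π γ) (hinv : κ.Invariant π) (hγ : γ ∈ Set.Ioc 0 1)
  (hfmeas : Measurable f) (hf : MemLp f 2 π) (hfc : ∀ x, f x ≤ c) (hf0 : ∫ x, f x ∂π = 0)
  (hfv : ∫ x, f x ^ 2 ∂π ≤ v)

include hgap hinv hγ hfmeas hf hfc hf0 hfv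

theorem HasAbsSpectralGap.lintegral_exp_mul_sum_chainLaw_le (n : ℕ) {τ : ℝ} (hτ : 0 ≤ τ)
    (hτc : τ * c < 1) :
    ∫⁻ xs, ENNReal.ofReal (Real.exp (γ * τ * ∑ i, f (xs i))) ∂chainLaw κ π n
      ≤ ENNReal.ofReal (Real.exp ((n + 1) * (γ * (τ ^ 2 * v / (1 - τ * c))))) := by
  have hscaled := hgap.lintegral_exp_sum_chainLaw_le hinv hγ (hfmeas.const_mul τ)
    (hf.const_mul τ) (fun x ↦ mul_le_mul_of_nonneg_left (hfc x) hτ) hτc (v := τ ^ 2 * v)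
    (by rw [integral_const_mul, hf0, mul_zero])
    (by simp only [mul_pow, integral_const_mul]; gcongr) n
  simpa only [← Finset.mul_sum, ← mul_assoc] using hscaled

theorem HasAbsSpectralGap.iInf_chernoff_chainLaw_le_of_pos (n : ℕ) {τ : ℝ} (hτ : 0 < τ)
    (hτc : τ * c < 1) :
    ⨅ (θ : ℝ) (_ : 0 < θ), ENNReal.ofReal (Real.exp (-(s * (n + 1) * θ))) *
        ∫⁻ xs, ENNReal.ofReal (Real.exp (θ * ∑ i, f (xs i))) ∂chainLaw κ π n
      ≤ ENNReal.ofReal (Real.exp ((n + 1) * γ * (τ ^ 2 * v / (1 - τ * c) - s * τ))) :=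
  calc _ ≤ ENNReal.ofReal (Real.exp (-(s * (n + 1) * (γ * τ)))) *
        ∫⁻ xs, ENNReal.ofReal (Real.exp (γ * τ * ∑ i, f (xs i))) ∂chainLaw κ π n :=
        iInf₂_le _ (mul_pos hγ.1 hτ)
    _ ≤ ENNReal.ofReal (Real.exp (-(s * (n + 1) * (γ * τ)))) *
        ENNReal.ofReal (Real.exp ((n + 1) * (γ * (τ ^ 2 * v / (1 - τ * c))))) := by
        gcongr
        exact hgap.lintegral_exp_mul_sum_chainLaw_le hinv hγ hfmeas hf hfc hf0 hfv n hτ.le hτc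
    _ = _ := by
        rw [← ENNReal.ofReal_mul (Real.exp_pos _).le, ← Real.exp_add]
        ring_nf

theorem HasAbsSpectralGap.iInf_chernoff_chainLaw_le_of_nonneg (n : ℕ) {τ : ℝ} (hτ : 0 ≤ τ)
    (hτc : τ * c < 1) :
    ⨅ (θ : ℝ) (_ : 0 < θ), ENNReal.ofReal (Real.exp (-(s * (n + 1) * θ))) *
        ∫⁻ xs, ENNReal.ofReal (Real.exp (θ * ∑ i, f (xs i))) ∂chainLaw κ π n
      ≤ ENNReal.ofReal (Real.exp ((n + 1) * γ * (τ ^ 2 * v / (1 - τ * c) - s * τ))) := by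
  have hcont : ContinuousAt (fun t : ℝ ↦
      ENNReal.ofReal (Real.exp ((n + 1) * γ * (t ^ 2 * v / (1 - t * c) - s * t)))) τ := by
    refine ENNReal.continuous_ofReal.continuousAt.comp (Real.continuous_exp.continuousAt.comp ?_)
    have : 1 - τ * c ≠ 0 := (sub_pos.2 hτc).ne'
    fun_prop (disch := assumption)
  have hnear : ∀ᶠ t in 𝓝[>] τ, t * c < 1 :=
    nhdsWithin_le_nhds ((continuous_mul_const c).continuousAt.eventually_lt_const hτc)
  refine ge_of_tendsto (x := 𝓝[>] τ) (hcont.tendsto.mono_left nhdsWithin_le_nhds) ?_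
  filter_upwards [hnear, self_mem_nhdsWithin] with t htc ht
  exact hgap.iInf_chernoff_chainLaw_le_of_pos hinv hγ hfmeas hf hfc hf0 hfv n (hτ.trans_lt ht) htc

theorem HasAbsSpectralGap.iInf_chernoff_chainLaw_le (n : ℕ) (hv : 0 < v) (hs : 0 ≤ s) :
    ⨅ (θ : ℝ) (_ : 0 < θ), ENNReal.ofReal (Real.exp (-(s * (n + 1) * θ))) *
        ∫⁻ xs, ENNReal.ofReal (Real.exp (θ * ∑ i, f (xs i))) ∂chainLaw κ π n
      ≤ ENNReal.ofReal (Real.exp (-((n + 1) * γ / 2 * (s ^ 2 / (2 * v + c * s))))) := by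
  have hc : 0 ≤ c := by
    simpa [hf0] using integral_mono (hf.integrable one_le_two) (integrable_const c) hfc
  have hden : 0 < 2 * v + c * s := by positivity
  have hτc : s / (2 * v + c * s) * c < 1 := by
    rw [div_mul_eq_mul_div, div_lt_one hden]
    linarith
  refine (hgap.iInf_chernoff_chainLaw_le_of_nonneg hinv hγ hfmeas hf hfc hf0 hfv n
    (div_nonneg hs hden.le) hτc).trans_eq ?_
  have hgapc : 1 - s / (2 * v + c * s) * c = 2 * v / (2 * v + c * s) := by
    field_simp
    ring
  congr 2
  rw [hgapc]
  field_simp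
  ring

end Bernstein

theorem min_sq_div_le_sq_div_add {v c s : ℝ} (hv : 0 < v) (hc : 0 < c) (hs : 0 ≤ s) :
    min (s ^ 2 / (4 * v)) (s / (10 * c)) ≤ s ^ 2 / (2 * v + c * s) := by
  rcases le_total (c * s) (2 * v) with hcs | hcs
  · calc _ ≤ s ^ 2 / (4 * v) := min_le_left _ _
      _ ≤ s ^ 2 / (2 * v + c * s) := by
        gcongr
        linarith
  · calc _ ≤ s / (10 * c) := min_le_right _ _
      _ ≤ s ^ 2 / (2 * v + c * s) := by
        rw [div_le_div_iff₀ (by positivity) (by positivity)]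
        nlinarith [mul_le_mul_of_nonneg_left hcs hs, mul_nonneg hc.le (sq_nonneg s)]

theorem variance_max_sub_integral_le {Ω : Type*} [MeasurableSpace Ω] {μ : Measure Ω}
    [IsProbabilityMeasure μ] {g : Ω → ℝ} (hg : MemLp g 2 μ) :
    Var[fun x ↦ max (g x - ∫ y, g y ∂μ) 0; μ] ≤ Var[g; μ] := by
  have hcentered : MemLp (fun x ↦ g x - ∫ y, g y ∂μ) 2 μ := hg.sub (memLp_const _)
  have hpos : MemLp (fun x ↦ max (g x - ∫ y, g y ∂μ) 0) 2 μ := hcentered.pos_part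
  calc Var[fun x ↦ max (g x - ∫ y, g y ∂μ) 0; μ]
      ≤ ∫ x, max (g x - ∫ y, g y ∂μ) 0 ^ 2 ∂μ := variance_le_expectation_sq hpos.1
    _ ≤ ∫ x, (g x - ∫ y, g y ∂μ) ^ 2 ∂μ :=
        integral_mono hpos.integrable_sq hcentered.integrable_sq fun x ↦
          sq_le_sq.2 (by simpa using abs_max_le_max_abs_abs (a := g x - ∫ y, g y ∂μ) (b := 0))
    _ = Var[g; μ] := (variance_eq_integral hg.aemeasurable).symm

theorem stmt15_general {X : Type*} [MeasurableSpace X] (κ : Kernel X X) [IsMarkovKernel κ]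
    (π : Measure X) [IsProbabilityMeasure π] (hinv : κ.Invariant π)
    (γ : ℝ) (hγ : γ ∈ Set.Ioc (0 : ℝ) 1) (hgap : HasAbsSpectralGap κ π γ) (n : ℕ)
    (g : X → ℝ) (hgmeas : Measurable g) (hgnonpos : ∀ x, g x ≤ 0) (hgL2 : MemLp g 2 π)
    (μv σ2 cplus : ℝ)
    (hμv : μv = ∫ x, g x ∂π) (hσ2 : σ2 = (∫ x, (g x) ^ 2 ∂π) - μv ^ 2)
    (hcplus : cplus = ∫ x, max (g x - μv) 0 ∂π)
    (hμvneg : μv < 0) (hσ2pos : 0 < σ2) :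
    ∀ s : ℝ, 0 ≤ s →
      ⨅ (θ : ℝ) (_ : 0 < θ),
          ENNReal.ofReal (Real.exp (-(s * (n + 1) * θ))) *
            ∫⁻ xs, ENNReal.ofReal
                (Real.exp (θ * ∑ i, (max (g (xs i) - μv) 0 - cplus)))
              ∂(chainLaw κ π n) ≤
        ENNReal.ofReal
          (Real.exp (-(((n + 1) * γ / 2) * min (s ^ 2 / (4 * σ2)) (s / (10 * |μv|))))) := by
  intro s hs
  set G : X → ℝ := fun x ↦ max (g x - μv) 0
  have hGmeas : Measurable G := (hgmeas.sub_const μv).max measurable_const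
  have hG : MemLp G 2 π := (hgL2.sub (memLp_const μv)).pos_part
  have hcplus0 : 0 ≤ cplus := hcplus ▸ integral_nonneg fun x ↦ le_max_right _ _
  have hGc (x : X) : G x - cplus ≤ |μv| := by
    have : G x ≤ |μv| := max_le (by linarith [hgnonpos x, neg_le_abs μv]) (abs_nonneg μv)
    linarith
  have hmean : ∫ x, (G x - cplus) ∂π = 0 := by
    rw [integral_sub (hG.integrable one_le_two) (integrable_const _), hcplus]
    simp
  have hvar : ∫ x, (G x - cplus) ^ 2 ∂π ≤ σ2 :=
    calc _ = Var[G; π] := by rw [variance_eq_integral hG.aemeasurable, hcplus]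
      _ ≤ Var[g; π] := by
        simpa only [G, hμv] using variance_max_sub_integral_le hgL2
      _ = σ2 := by rw [variance_eq_sub hgL2, hσ2, hμv]; rfl
  refine (hgap.iInf_chernoff_chainLaw_le hinv hγ (hGmeas.sub_const cplus)
    (hG.sub (memLp_const cplus)) hGc hmean hvar n hσ2pos hs).trans ?_
  have := hγ.1
  gcongr
  exact min_sq_div_le_sq_div_add hσ2pos (abs_pos.2 hμvneg.ne) hs

theorem stmt15 {X : Type*} [MeasurableSpace X] (K : X → Measure X) (π : Measure X)
    (hK : ∀ x, IsProbabilityMeasure (K x)) (hKmeas : Measurable K)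
    [IsProbabilityMeasure π]
    (γ : ℝ) (hγ : γ ∈ Set.Ioc (0 : ℝ) 1)
    (hrev : Reversible K π) (hgap : HasAbsSpectralGap K π γ)
    (n : ℕ) -- the chain has length `P = n + 1 ≥ 1`
    (g : X → ℝ) (hgmeas : Measurable g) (hgnonpos : ∀ x, g x ≤ 0)
    (hgL2 : MemLp g 2 π)
    (μv σ2 cplus : ℝ)
    (hμv : μv = ∫ x, g x ∂π) (hσ2 : σ2 = (∫ x, (g x) ^ 2 ∂π) - μv ^ 2)
    (hcplus : cplus = ∫ x, max (g x - μv) 0 ∂π)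
    (hμvneg : μv < 0) (hσ2pos : 0 < σ2) :
    ∀ s : ℝ, 0 ≤ s →
      ⨅ (θ : ℝ) (_ : 0 < θ),
          ENNReal.ofReal (Real.exp (-(s * (n + 1) * θ))) *
            ∫⁻ xs, ENNReal.ofReal
                (Real.exp (θ * ∑ i, (max (g (xs i) - μv) 0 - cplus)))
              ∂(chainLaw K π n) ≤
        ENNReal.ofReal
          (Real.exp (-(((n + 1) * γ / 2) * min (s ^ 2 / (4 * σ2)) (s / (10 * |μv|))))) := by
  have : IsMarkovKernel (⟨K, hKmeas⟩ : Kernel X X) := ⟨hK⟩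
  exact stmt15_general ⟨K, hKmeas⟩ π (Kernel.IsReversible.invariant fun A B ↦ hrev A B) γ hγ hgap n
    g hgmeas hgnonpos hgL2 μv σ2 cplus hμv hσ2 hcplus hμvneg hσ2pos
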